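/- arXiv:1907.02308 — 4 statements merged into one kernel-verified Lean document; each statement's English description precedes it below -/
import Mathlib

section
/- Let w be a primitive word of length n over a linearly ordered alphabet, let M_alt(w) be the matrix of its ≼_alt-sorted cyclic rotations and L = abwt(w) its last column. If 0 ≤ i < j < n and L[i] = L[j], then LF(j) < LF(i); that is, equal symbols occur in the last column L in the reverse of the relative order in which their corresponding occurrences appear in the first column F. -/
/-!
Moving the last symbol of a word to the front shifts every other position by one, so the comparison
made at each of these positions switches direction. Two distinct words with the same length and the
same last symbol first differ before their last position, and after the move that difference decides
the comparison the other way round. Hence the move reverses `≼_alt` on such words.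
-/

namespace Paper

variable {α : Type*}

/-- Extended alternating lexicographic strict order; the flag `b` is `true`
when the current position index is even. -/
def altLtAux [LinearOrder α] : Bool → List α → List α → Prop
  | _, [], [] => False
  | b, [], _ :: _ => b = true
  | b, _ :: _, [] => b = false
  | b, c :: x, d :: y => (if b then c < d else d < c) ∨ (c = d ∧ altLtAux (!b) x y)

/-- The alternating lexicographic strict order (positions indexed from 0). -/
def AltLt [LinearOrder α] (x y : List α) : Prop := altLtAux true x y

/-- The reflexive alternating lexicographic order. -/
def AltLe [LinearOrder α] (x y : List α) : Prop := x = y ∨ AltLt x y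

/-- A word is primitive if its cyclic rotations are pairwise distinct. -/
def Primitive (w : List α) : Prop :=
  ∀ i j, i < w.length → j < w.length → w.rotate i = w.rotate j → i = j

theorem rotate_length_sub_one_concat (x : List α) (c : α) :
    (x ++ [c]).rotate ((x ++ [c]).length - 1) = c :: x := by
  simp [List.rotate_append_length_eq]

section AltLt

variable [LinearOrder α]

theorem altLtAux_not_iff (b : Bool) (x y : List α) : altLtAux (!b) x y ↔ altLtAux b y x := by
  induction x generalizing b y with
  | nil => cases y <;> cases b <;> simp [altLtAux]
  | cons c x ih => cases y <;> cases b <;> simp [altLtAux, ← ih, eq_comm]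

theorem altLtAux_asymm {b : Bool} {x y : List α} (h : altLtAux b x y) : ¬altLtAux b y x := by
  induction x generalizing b y with
  | nil => cases y <;> simp_all [altLtAux]
  | cons c x ih =>
    cases y with
    | nil => simp_all [altLtAux]
    | cons d y =>
      rcases h with hcd | ⟨rfl, hxy⟩
      · cases b <;> simp_all [altLtAux, hcd.not_gt, hcd.ne, hcd.ne']
      · simpa [altLtAux] using ih hxy

instance : Std.Asymm (AltLt (α := α)) :=
  ⟨fun _ _ => altLtAux_asymm⟩

theorem altLtAux_append_right_iff {x y : List α} (hlen : x.length = y.length) (b : Bool)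
    (z : List α) : altLtAux b (x ++ z) (y ++ z) ↔ altLtAux b x y := by
  induction x generalizing b y with
  | nil =>
    obtain rfl : y = [] := List.length_eq_zero_iff.mp hlen.symm
    have hirrefl : ¬altLtAux b z z := fun h => altLtAux_asymm h h
    simpa [altLtAux] using hirrefl
  | cons c x ih =>
    cases y with
    | nil => simp at hlen
    | cons d y => simp [altLtAux, ih (Nat.succ.inj hlen)]

theorem altLt_append_right_iff {x y : List α} (hlen : x.length = y.length) (z : List α) :
    AltLt (x ++ z) (y ++ z) ↔ AltLt x y :=
  altLtAux_append_right_iff hlen true z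

theorem altLt_cons_iff (c : α) (x y : List α) : AltLt (c :: x) (c :: y) ↔ AltLt y x := by
  simpa [AltLt, altLtAux] using altLtAux_not_iff true x y

theorem altLt_rotate_length_sub_one_iff {x y : List α} (hlen : x.length = y.length)
    (hlast : x.getLast? = y.getLast?) :
    AltLt (x.rotate (x.length - 1)) (y.rotate (y.length - 1)) ↔ AltLt y x := by
  rcases x.eq_nil_or_concat' with rfl | ⟨x, c, rfl⟩
  · obtain rfl : y = [] := List.length_eq_zero_iff.mp hlen.symm
    rfl
  · obtain ⟨y, rfl⟩ := List.getLast?_eq_some_iff.mp (hlast.symm.trans List.getLast?_concat)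
    have hlen' : y.length = x.length := by simpa using hlen.symm
    rw [rotate_length_sub_one_concat, rotate_length_sub_one_concat, altLt_cons_iff,
      altLt_append_right_iff hlen']

end AltLt

theorem Primitive.injective_rotate {w : List α} (hw : Primitive w) :
    Function.Injective fun j : Fin w.length => w.rotate j :=
  fun i j h => Fin.ext (hw i j i.isLt j.isLt h)

theorem Primitive.isRotated_of_forall_exists_eq_rotate {w : List α} (hw : Primitive w)
    {rows : Fin w.length → List α} (hrows : ∀ j : Fin w.length, ∃ i, rows i = w.rotate j)
    (i : Fin w.length) : w ~r rows i := by
  choose f hf using hrows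
  have hf_inj : Function.Injective f := by
    refine Function.Injective.of_comp (f := rows) ?_
    simpa only [Function.comp_def, hf] using hw.injective_rotate
  obtain ⟨j, rfl⟩ := Finite.surjective_of_injective hf_inj i
  exact ⟨j, (hf j).symm⟩

theorem abwt_LF_reverses_equal_symbols_general {ι : Type*} [LinearOrder α] [LinearOrder ι]
    {rows : ι → List α} {L : ι → α} {LF : ι → ι}
    (hlen : ∀ i j, (rows i).length = (rows j).length)
    (hsorted : ∀ i j, i < j → AltLt (rows i) (rows j))
    (hL : ∀ i, (rows i).getLast? = some (L i))
    (hLF : ∀ i, rows (LF i) = (rows i).rotate ((rows i).length - 1))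
    {i j : ι} (hij : i < j) (hLij : L i = L j) : LF j < LF i := by
  have hlast : (rows j).getLast? = (rows i).getLast? := by rw [hL, hL, hLij]
  have hrows : AltLt (rows (LF j)) (rows (LF i)) := by
    rw [hLF, hLF, altLt_rotate_length_sub_one_iff (hlen j i) hlast]
    exact hsorted i j hij
  let rowsEmbedding : ((· < ·) : ι → ι → Prop) ↪r AltLt := RelEmbedding.ofMonotone rows hsorted
  exact rowsEmbedding.map_rel_iff.mp hrows

/-- in the ≼_alt-sorted rotation matrix of a primitive word,
equal symbols of the last column `L` are mapped by `LF` in reverse order: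
if `i < j` and `L i = L j` then `LF j < LF i`. -/
theorem abwt_LF_reverses_equal_symbols [LinearOrder α] (n : ℕ) (w : List α)
    (hw : w.length = n) (hprim : Primitive w)
    (rows : Fin n → List α) (L : Fin n → α) (LF : Fin n → Fin n)
    (hrows : ∀ j : Fin n, ∃ i : Fin n, rows i = w.rotate j.val)
    (hsorted : ∀ i j : Fin n, i < j → AltLt (rows i) (rows j))
    (hL : ∀ i, (rows i).getLast? = some (L i))
    (hLF : ∀ i, rows (LF i) = (rows i).rotate ((rows i).length - 1)) :
    ∀ i j : Fin n, i < j → L i = L j → LF j < LF i := by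
  subst hw
  have hrot := hprim.isRotated_of_forall_exists_eq_rotate hrows
  have hlen i j := (hrot i).perm.length_eq.symm.trans (hrot j).perm.length_eq
  intro i j
  exact abwt_LF_reverses_equal_symbols_general hlen hsorted hL hLF

end Paper
end

section
/- For every tuple K = (π_0, π_1, …, π_{k−1}) of linear orders on a finite alphabet Σ with π_0 the standard order, and for every n, the transformation BWT_K is invertible: the map sending a primitive word w of length n to the pair (bwt_K(w), I), where I is the row index of w in the ≼_K-sorted rotation matrix, is injective on primitive words of length n. -/
namespace Paper

variable {α : Type*}

/-- Generalized lexicographic strict order on equal-length words determined by a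
sequence `σ` of strict orders, one per position (`σ d` is used at position `d`). -/
def KLt (σ : ℕ → α → α → Prop) : ℕ → List α → List α → Prop
  | _, [], _ => False
  | _, _ :: _, [] => False
  | d, a :: x, b :: y => σ d a b ∨ (a = b ∧ KLt σ (d + 1) x y)

/-! The right rotation of words permutes the rows of the rotation matrix and moves the last column
to the front. Hence the last column and the first `m` columns together determine the first `m + 1`
columns up to the order of the rows. Comparing words position by position is compatible with taking
prefixes, so these truncated rows are still sorted, and a sorted family is determined by its
multiset of values. By induction on `m` the last column determines the whole matrix. -/

theorem eq_of_comp_perm_eq_of_sorted {β : Type*} {r : β → β → Prop} [Std.Antisymm r] {n : ℕ}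
    {f g : Fin n → β} (hf : ∀ i j, i < j → r (f i) (f j)) (hg : ∀ i j, i < j → r (g i) (g j))
    (e₁ e₂ : Equiv.Perm (Fin n)) (h : f ∘ e₁ = g ∘ e₂) : f = g := by
  have hperm : (List.ofFn f).Perm (List.ofFn g) :=
    calc
      (List.ofFn f).Perm (List.ofFn (f ∘ e₁)) := (e₁.ofFn_comp_perm f).symm
      _ = List.ofFn (g ∘ e₂) := congrArg List.ofFn h
      List.Perm _ (List.ofFn g) := e₂.ofFn_comp_perm g
  exact List.ofFn_injective <|
    hperm.eq_of_pairwise' (List.pairwise_ofFn.mpr hf) (List.pairwise_ofFn.mpr hg)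

theorem take_succ_eq_getLast?_rotate_one_append {x : List α} {m : ℕ} (hm : m < x.length) :
    x.take (m + 1) = (x.rotate 1).getLast?.toList ++ (x.rotate 1).take m := by
  obtain _ | ⟨a, t⟩ := x
  · simp
  · have hmt : m ≤ t.length := Nat.lt_succ_iff.mp hm
    simp [List.take_append_of_le_length hmt]

section KOrder

variable {σ : ℕ → α → α → Prop} {d : ℕ} {x y : List α}

theorem KLt.asymm [∀ d, Std.Asymm (σ d)] (hxy : KLt σ d x y) : ¬KLt σ d y x := by
  induction x generalizing d y with
  | nil => simp [KLt] at hxy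
  | cons a x ih =>
    obtain _ | ⟨b, y⟩ := y
    · simp [KLt] at hxy
    · obtain hab | ⟨rfl, hxy⟩ := hxy
      · rintro (hba | ⟨rfl, -⟩)
        exacts [asymm_of (σ d) hab hba, asymm_of (σ d) hab hab]
      · rintro (haa | ⟨-, hyx⟩)
        exacts [asymm_of (σ d) haa haa, ih hxy hyx]

/-- The order `≼_K` of the paper on equal-length words, for words that start at position `d`. -/
def KLe (σ : ℕ → α → α → Prop) (d : ℕ) (x y : List α) : Prop :=
  x = y ∨ KLt σ d x y

instance KLe.antisymm [∀ d, Std.Asymm (σ d)] : Std.Antisymm (KLe σ d) where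
  antisymm := by
    rintro x y (rfl | hxy) (hyx | hyx)
    exacts [rfl, rfl, hyx.symm, (hxy.asymm hyx).elim]

theorem KLt.take (h : KLt σ d x y) (m : ℕ) : KLe σ d (x.take m) (y.take m) := by
  induction m generalizing d x y with
  | zero => simp [KLe]
  | succ m ih =>
    match x, y, h with
    | _ :: _, _ :: _, .inl hab => exact .inr (.inl hab)
    | _ :: _, _ :: _, .inr ⟨rfl, hxy⟩ =>
      obtain heq | hlt := ih hxy
      · exact .inl (congrArg (List.cons _) heq)
      · exact .inr (.inr ⟨rfl, hlt⟩)

theorem KLe.take (h : KLe σ d x y) (m : ℕ) : KLe σ d (x.take m) (y.take m) := by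
  obtain rfl | h := h
  exacts [.inl rfl, h.take m]

end KOrder

/-- `rows` is the matrix of the transformation `BWT_K` for the word `w` of length `n`: it lists the
rotations of `w`, with multiplicity, in increasing `≼_K` order. Counting multiplicities makes the
notion meaningful for words that are not primitive. -/
structure IsBWTMatrix (σ : ℕ → α → α → Prop) {n : ℕ} (w : List α) (rows : Fin n → List α) :
    Prop where
  length_eq : w.length = n
  exists_perm : ∃ e : Equiv.Perm (Fin n), ∀ j, rows (e j) = w.rotate j
  sorted : ∀ i j, i < j → KLe σ 0 (rows i) (rows j)

namespace IsBWTMatrix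

variable {σ : ℕ → α → α → Prop} {n : ℕ} {w w₁ w₂ : List α} {rows rows₁ rows₂ : Fin n → List α}

theorem of_primitive (hw : w.length = n) (hp : Primitive w)
    (hr : ∀ j : Fin n, ∃ i, rows i = w.rotate j) (hs : ∀ i j, i < j → KLt σ 0 (rows i) (rows j)) :
    IsBWTMatrix σ w rows := by
  choose f hf using hr
  have f_injective : Function.Injective f := fun i j hij =>
    Fin.ext <| hp i j (hw ▸ i.isLt) (hw ▸ j.isLt) <| by rw [← hf, ← hf, hij]
  exact ⟨hw, ⟨.ofBijective f (Finite.injective_iff_bijective.mp f_injective), hf⟩,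
    fun i j hij => .inr (hs i j hij)⟩

theorem length_row (h : IsBWTMatrix σ w rows) (i : Fin n) : (rows i).length = n := by
  obtain ⟨e, he⟩ := h.exists_perm
  rw [← e.apply_symm_apply i, he, List.length_rotate, h.length_eq]

theorem exists_perm_rotate_one (h : IsBWTMatrix σ w rows) :
    ∃ g : Equiv.Perm (Fin n), ∀ i, (rows (g i)).rotate 1 = rows i := by
  obtain ⟨e, he⟩ := h.exists_perm
  have rotate_one_row (j : Fin n) : (rows (e j)).rotate 1 = rows (e (finRotate n j)) := by
    have : NeZero n := ⟨(j.pos).ne'⟩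
    rw [he, he, List.rotate_rotate, ← List.rotate_mod, h.length_eq, finRotate_apply, Fin.val_add,
      Fin.val_one', Nat.add_mod_mod]
  refine ⟨e.symm.trans ((finRotate n).symm.trans e), fun i => ?_⟩
  simp only [Equiv.trans_apply, rotate_one_row, Equiv.apply_symm_apply]

theorem sorted_take (h : IsBWTMatrix σ w rows) (m : ℕ) (i j : Fin n) (hij : i < j) :
    KLe σ 0 ((rows i).take m) ((rows j).take m) :=
  (h.sorted i j hij).take m

theorem exists_perm_take_succ (h : IsBWTMatrix σ w rows) :
    ∃ g : Equiv.Perm (Fin n), ∀ i, ∀ m < n,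
      (rows (g i)).take (m + 1) = (rows i).getLast?.toList ++ (rows i).take m := by
  obtain ⟨g, hg⟩ := h.exists_perm_rotate_one
  refine ⟨g, fun i m hm => ?_⟩
  rw [take_succ_eq_getLast?_rotate_one_append (hm.trans_eq (h.length_row _).symm), hg]

variable [∀ d, Std.Asymm (σ d)]

theorem take_eq_take (h₁ : IsBWTMatrix σ w₁ rows₁) (h₂ : IsBWTMatrix σ w₂ rows₂)
    (hlast : ∀ i, (rows₁ i).getLast? = (rows₂ i).getLast?) {m : ℕ} (hm : m ≤ n) (i : Fin n) :
    (rows₁ i).take m = (rows₂ i).take m := by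
  induction m generalizing i with
  | zero => simp only [List.take_zero]
  | succ m ih =>
    obtain ⟨g₁, hg₁⟩ := h₁.exists_perm_take_succ
    obtain ⟨g₂, hg₂⟩ := h₂.exists_perm_take_succ
    have hcomp : (fun i => (rows₁ i).take (m + 1)) ∘ g₁ = (fun i => (rows₂ i).take (m + 1)) ∘ g₂ :=
      funext fun i => by
        simp only [Function.comp_apply, hg₁ i m hm, hg₂ i m hm, hlast i, ih (Nat.le_of_lt hm) i]
    exact congrFun
      (eq_of_comp_perm_eq_of_sorted (h₁.sorted_take _) (h₂.sorted_take _) g₁ g₂ hcomp) i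

theorem rows_eq_of_getLast?_eq (h₁ : IsBWTMatrix σ w₁ rows₁) (h₂ : IsBWTMatrix σ w₂ rows₂)
    (hlast : ∀ i, (rows₁ i).getLast? = (rows₂ i).getLast?) : rows₁ = rows₂ := by
  funext i
  rw [← List.take_of_length_le (h₁.length_row i).le, h₁.take_eq_take h₂ hlast le_rfl,
    List.take_of_length_le (h₂.length_row i).le]

end IsBWTMatrix

theorem bwtK_invertible_general {σ : ℕ → α → α → Prop} [∀ d, Std.Asymm (σ d)] {n : ℕ}
    {w₁ w₂ : List α} {rows₁ rows₂ : Fin n → List α} (h₁ : IsBWTMatrix σ w₁ rows₁)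
    (h₂ : IsBWTMatrix σ w₂ rows₂) (hlast : ∀ i, (rows₁ i).getLast? = (rows₂ i).getLast?)
    {I : Fin n} (hI₁ : rows₁ I = w₁) (hI₂ : rows₂ I = w₂) : w₁ = w₂ := by
  rw [← hI₁, ← hI₂, h₁.rows_eq_of_getLast?_eq h₂ hlast]

/-- for every tuple `K = (π 0, …, π (k-1))` of linear orders with
`π 0` the standard order, the transformation `BWT_K` is invertible: the map
sending a primitive word `w` of length `n` to the pair `(bwt_K w, I)` (last
column of the ≼_K-sorted rotation matrix together with the row index of `w`)
is injective on primitive words of length `n`. -/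
theorem bwtK_invertible [LinearOrder α] (k : ℕ) (hk : 0 < k)
    (π : Fin k → α → α → Prop)
    (horder : ∀ t, IsStrictTotalOrder α (π t))
    (h0 : π ⟨0, hk⟩ = fun a b : α => a < b)
    (n : ℕ) (w₁ w₂ : List α) (hw₁ : w₁.length = n) (hw₂ : w₂.length = n)
    (hp₁ : Primitive w₁) (hp₂ : Primitive w₂)
    (rows₁ rows₂ : Fin n → List α) (L₁ L₂ : Fin n → α) (I₁ I₂ : Fin n)
    (hr₁ : ∀ j : Fin n, ∃ i : Fin n, rows₁ i = w₁.rotate j.val)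
    (hr₂ : ∀ j : Fin n, ∃ i : Fin n, rows₂ i = w₂.rotate j.val)
    (hs₁ : ∀ i j : Fin n, i < j →
      KLt (fun d => π ⟨d % k, Nat.mod_lt d hk⟩) 0 (rows₁ i) (rows₁ j))
    (hs₂ : ∀ i j : Fin n, i < j →
      KLt (fun d => π ⟨d % k, Nat.mod_lt d hk⟩) 0 (rows₂ i) (rows₂ j))
    (hL₁ : ∀ i, (rows₁ i).getLast? = some (L₁ i))
    (hL₂ : ∀ i, (rows₂ i).getLast? = some (L₂ i))
    (hI₁ : rows₁ I₁ = w₁) (hI₂ : rows₂ I₂ = w₂)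
    (hL : L₁ = L₂) (hI : I₁ = I₂) :
    w₁ = w₂ := by
  have (d : ℕ) : Std.Asymm (π ⟨d % k, Nat.mod_lt d hk⟩) := have := horder; inferInstance
  exact bwtK_invertible_general (.of_primitive hw₁ hp₁ hr₁ hs₁) (.of_primitive hw₂ hp₂ hr₂ hs₂)
    (fun i => by rw [hL₁, hL₂, hL]) hI₁ (hI ▸ hI₂)

end Paper
end

section
/- Let Σ = {a, b, c} be a three-letter alphabet with standard order a < b < c, and let K = (Id, π) where π is a linear order on Σ. If there exist symbols x, y, z, t ∈ Σ with x < y and z < t in the standard order, such that x is smaller than y in π and z is larger than t in π, then BWT_K is not rank-invertible. -/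
namespace Paper

variable {α : Type*}

/-- Rank-invertibility of the generalized BWT determined by the sequence of
per-position strict orders `σ`: there is a function `f` computing `LF i` from
the Parikh vector of the last column `L`, the symbol `L i`, and the number of
occurrences of `L i` in `L[0..i]`. -/
def RankInvertible [LinearOrder α] (σ : ℕ → α → α → Prop) : Prop :=
  ∃ f : (α → ℕ) → α → ℕ → ℕ,
    ∀ (n : ℕ) (w : List α), w.length = n → Primitive w →
      ∀ (rows : Fin n → List α) (L : Fin n → α) (LF : Fin n → Fin n),
        (∀ j : Fin n, ∃ i : Fin n, rows i = w.rotate j.val) →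
        (∀ i j : Fin n, i < j → KLt σ 0 (rows i) (rows j)) →
        (∀ i, (rows i).getLast? = some (L i)) →
        (∀ i, rows (LF i) = (rows i).rotate ((rows i).length - 1)) →
        ∀ i : Fin n, (LF i : ℕ) =
          f (fun c => (List.ofFn L).count c) (L i)
            (((List.ofFn L).take (i.val + 1)).count (L i))

/-!
Let `a < b < c`. In the rotation matrix of each of the words `aabc`, `abac` and `aacb` the two rows
starting with `a` come first and are ordered by their second letters, which are compared in the
second order of `K`. The first `a` of the last column ends the row that starts with the smaller of
these second letters in the first order. Hence `LF` maps it to row `0` if the second order agrees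
with the first one on that pair of letters, and to row `1` otherwise. The three words have the same
Parikh vector and test the pairs `(a, b)`, `(b, c)` and `(a, c)`, so a rank function, which returns
one value for all of them, forces the two orders to agree on all three pairs or on none. Any two
pairs are linked through such triples.
-/

section Rotations

variable {n : ℕ}

theorem rotate_ofFn (v : Fin n → α) (q : Fin n) :
    (List.ofFn v).rotate q = List.ofFn fun k => v (q + k) := by
  refine List.ext_getElem (by simp) fun k _ _ => ?_
  simp only [List.getElem_rotate, List.getElem_ofFn, List.length_ofFn, Fin.add_def, add_comm k]

/-- `p` lists the starting positions of the rotations of `v` in increasing order: row `i` of the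
sorted rotation matrix is `v` rotated by `p i`, so that `L i = v (p i - 1)` and
`LF i = p.symm (p i - 1)`. -/
def SortsRotations (σ : ℕ → α → α → Prop) (v : Fin n → α) (p : Equiv.Perm (Fin n)) : Prop :=
  ∀ ⦃i j⦄, i < j → KLt σ 0 ((List.ofFn v).rotate (p i)) ((List.ofFn v).rotate (p j))

variable [NeZero n]

theorem getLast?_rotate_ofFn (v : Fin n → α) (q : Fin n) :
    ((List.ofFn v).rotate q).getLast? = some (v (q - 1)) := by
  obtain ⟨m, rfl⟩ := Nat.exists_eq_succ_of_ne_zero (NeZero.ne n)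
  rw [rotate_ofFn, List.getLast?_eq_getLast_of_ne_nil (by simp), List.getLast_ofFn_succ,
    sub_eq_add_neg, show (-1 : Fin (m + 1)) = Fin.last m from Fin.ext Fin.coe_neg_one]

theorem rotate_ofFn_sub_one (v : Fin n → α) (q : Fin n) :
    (List.ofFn v).rotate (q - 1 : Fin n) =
      ((List.ofFn v).rotate q).rotate (((List.ofFn v).rotate q).length - 1) := by
  obtain ⟨m, rfl⟩ := Nat.exists_eq_succ_of_ne_zero (NeZero.ne n)
  have hlast : ((List.ofFn v).rotate q).length - 1 = (-1 : Fin (m + 1)) := by simp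
  rw [hlast, rotate_ofFn v q, rotate_ofFn, rotate_ofFn]
  simp only [sub_eq_add_neg, add_assoc]

theorem primitive_ofFn_of_unique {v : Fin n → α} {q : Fin n} (unique : ∀ k, v k = v q → k = q) :
    Primitive (List.ofFn v) := by
  intro i j hi hj hij
  rw [List.length_ofFn] at hi hj
  lift i to Fin n using hi
  lift j to Fin n using hj
  rw [rotate_ofFn, rotate_ofFn] at hij
  have hshift : v (i + (q - i)) = v (j + (q - i)) := congrFun (List.ofFn_injective hij) (q - i)
  rw [add_sub_cancel] at hshift
  have hq : j + (q - i) = q := unique _ hshift.symm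
  congr 1
  grind

end Rotations

theorem kLt_ofFn {σ : ℕ → α → α → Prop} {m : ℕ} {x y : Fin (m + 2) → α}
    (h : σ 0 (x 0) (y 0) ∨ x 0 = y 0 ∧ σ 1 (x 1) (y 1)) :
    KLt σ 0 (List.ofFn x) (List.ofFn y) := by
  simp only [List.ofFn_succ, KLt]
  exact h.imp_right (And.imp_right .inl)

section LinearOrder

variable [LinearOrder α] {σ : ℕ → α → α → Prop} {f : (α → ℕ) → α → ℕ → ℕ}

/-- `f` computes the last-to-first permutation from the Parikh vector, the symbol and its rank;
`RankInvertible σ` asserts that such an `f` exists. Words are functions on `Fin n`, so that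
cyclic shifts of positions are additions. -/
def IsRankFunction (σ : ℕ → α → α → Prop) (f : (α → ℕ) → α → ℕ → ℕ) : Prop :=
  ∀ ⦃n : ℕ⦄ [NeZero n] ⦃v : Fin n → α⦄ ⦃p : Equiv.Perm (Fin n)⦄,
    Primitive (List.ofFn v) → SortsRotations σ v p → ∀ i, (p.symm (p i - 1) : ℕ) =
      f (fun c => (List.ofFn v).count c) (v (p i - 1))
        (((List.ofFn fun j => v (p j - 1)).take (i + 1)).count (v (p i - 1)))

theorem RankInvertible.exists_isRankFunction (h : RankInvertible σ) :
    ∃ f, IsRankFunction σ f := by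
  obtain ⟨f, hf⟩ := h
  refine ⟨f, fun n _ v p hv hp i => ?_⟩
  have hLF := hf n (List.ofFn v) List.length_ofFn hv (fun i => (List.ofFn v).rotate (p i))
    (fun i => v (p i - 1)) (fun i => p.symm (p i - 1)) (fun j => ⟨p.symm j, by simp⟩) hp
    (fun i => getLast?_rotate_ofFn v (p i))
    (fun i => by simpa only [Equiv.apply_symm_apply] using rotate_ofFn_sub_one v (p i)) i
  have hperm : (List.ofFn fun i => v (p i - 1)).Perm (List.ofFn v) :=
    Equiv.Perm.ofFn_comp_perm (p.trans (Equiv.subRight 1)) v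
  simpa only [hperm.count_eq] using hLF

theorem count_take_succ_ofFn_eq_one {n : ℕ} {L : Fin n → α} {i : Fin n}
    (first : ∀ j < i, L j ≠ L i) : ((List.ofFn L).take (i + 1)).count (L i) = 1 := by
  have hnotMem : L i ∉ (List.ofFn L).take i := by
    rw [List.mem_take_iff_getElem]
    rintro ⟨j, hj, hji⟩
    rw [List.getElem_ofFn] at hji
    exact first ⟨j, _⟩ (Fin.mk_lt_of_lt_val (by omega)) hji
  rw [List.take_succ_eq_append_getElem (by simp), List.count_append,
    List.count_eq_zero.mpr hnotMem, List.getElem_ofFn, List.count_singleton_self]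

theorem IsRankFunction.apply_one_eq (hf : IsRankFunction σ f) {n : ℕ} [NeZero n] {v : Fin n → α}
    {p : Equiv.Perm (Fin n)} (hv : Primitive (List.ofFn v)) (hp : SortsRotations σ v p)
    (hmono : Monotone (v ∘ p)) {q : Fin n} (hmin : ∀ k ≠ q, v k = v q → v (q + 1) < v (k + 1)) :
    f (fun c => (List.ofFn v).count c) (v q) 1 = p.symm q := by
  have hrow : p (p.symm (q + 1)) - 1 = q := by simp
  have hfirst : ∀ j < p.symm (q + 1), v (p j - 1) ≠ v (p (p.symm (q + 1)) - 1) := by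
    intro j hj heq
    rw [hrow] at heq
    have hne : p j - 1 ≠ q := by
      rintro rfl
      simp at hj
    have hle : v (p j) ≤ v (q + 1) := by simpa using hmono hj.le
    exact (hmin _ hne heq).not_ge (by simpa using hle)
  have hLF := hf hv hp (p.symm (q + 1))
  rw [count_take_succ_ofFn_eq_one (L := fun j => v (p j - 1)) hfirst, hrow] at hLF
  exact hLF.symm

section FourLetters

variable {a b c : α} {v : Fin 4 → α} {p : Equiv.Perm (Fin 4)}

theorem monotone_aabc (hab : a < b) (hbc : b < c) : Monotone ![a, a, b, c] := by
  rw [Fin.monotone_iff_le_succ]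
  intro i
  fin_cases i
  exacts [le_rfl, hab.le, hbc.le]

theorem primitive_of_comp_eq_aabc (hab : a < b) (hbc : b < c) (hv : v ∘ p = ![a, a, b, c]) :
    Primitive (List.ofFn v) := by
  refine primitive_ofFn_of_unique (q := p 3) fun k hk => ?_
  obtain ⟨i, rfl⟩ := p.surjective k
  have hi : ![a, a, b, c] i = c := by
    rw [← hv]
    exact hk.trans (congrFun hv 3)
  fin_cases i
  exacts [((hab.trans hbc).ne hi).elim, ((hab.trans hbc).ne hi).elim, (hbc.ne hi).elim, rfl]

theorem sortsRotations_of_comp_eq_aabc (h₀ : σ 0 = (· < ·)) (hab : a < b) (hbc : b < c)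
    (hv : v ∘ p = ![a, a, b, c]) (h : σ 1 (v (p 0 + 1)) (v (p 1 + 1))) : SortsRotations σ v p := by
  have hcol (k) : v (p k) = ![a, a, b, c] k := congrFun hv k
  intro i j hij
  rw [rotate_ofFn, rotate_ofFn]
  apply kLt_ofFn
  simp only [h₀, add_zero, hcol]
  by_cases htie : i = 0 ∧ j = 1
  · obtain ⟨rfl, rfl⟩ := htie
    exact .inr ⟨rfl, h⟩
  · left
    fin_cases i <;> fin_cases j <;> simp_all [hab.trans hbc]

theorem IsRankFunction.apply_one_eq_of_comp_eq_aabc (hf : IsRankFunction σ f)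
    (h₀ : σ 0 = (· < ·)) (hab : a < b) (hbc : b < c) (hv : v ∘ p = ![a, a, b, c])
    (h : σ 1 (v (p 0 + 1)) (v (p 1 + 1))) {q : Fin 4} (hq : v q = a)
    (hmin : ∀ k ≠ q, v k = a → v (q + 1) < v (k + 1)) :
    f (fun x => [a, a, b, c].count x) a 1 = p.symm q := by
  have hletters : (List.ofFn v).Perm [a, a, b, c] := by
    simpa [hv] using (p.ofFn_comp_perm v).symm
  subst hq
  simpa only [hletters.count_eq] using
    hf.apply_one_eq (primitive_of_comp_eq_aabc hab hbc hv)
      (sortsRotations_of_comp_eq_aabc h₀ hab hbc hv h) (hv ▸ monotone_aabc hab hbc) hmin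

theorem IsRankFunction.apply_one_eq_zero_iff (hf : IsRankFunction σ f)
    [Std.Trichotomous (σ 1)] (h₀ : σ 0 = (· < ·)) (hab : a < b) (hbc : b < c)
    (hv : v ∘ p = ![a, a, b, c]) (hlt : v (p 0 + 1) < v (p 1 + 1)) :
    f (fun x => [a, a, b, c].count x) a 1 = 0 ↔ σ 1 (v (p 0 + 1)) (v (p 1 + 1)) := by
  have hq : v (p 0) = a := congrFun hv 0
  have hmin : ∀ k ≠ p 0, v k = a → v (p 0 + 1) < v (k + 1) := by
    intro k hk hka
    obtain ⟨i, rfl⟩ := p.surjective k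
    have hi : ![a, a, b, c] i = a := hv ▸ hka
    fin_cases i
    exacts [(hk rfl).elim, hlt, (hab.ne' hi).elim, ((hab.trans hbc).ne' hi).elim]
  refine ⟨fun hzero => ?_, fun h => ?_⟩
  · by_contra hnot
    have h' : σ 1 (v (p 1 + 1)) (v (p 0 + 1)) := by
      by_contra hnot'
      exact hlt.ne (Std.Trichotomous.trichotomous _ _ hnot hnot')
    -- The reversed comparison exchanges the first two rows of the matrix.
    have hv' : v ∘ (p * Equiv.swap 0 1 : Equiv.Perm (Fin 4)) = ![a, a, b, c] := by
      have hcol (k) : v (p k) = ![a, a, b, c] k := congrFun hv k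
      ext i
      fin_cases i
      exacts [hcol 1, hcol 0, hcol 2, hcol 3]
    have hrow : (p * Equiv.swap 0 1 : Equiv.Perm (Fin 4)).symm (p 0) = 1 := by
      simp [Equiv.symm_apply_eq]
    have hone := hf.apply_one_eq_of_comp_eq_aabc h₀ hab hbc hv' h' hq hmin
    rw [hzero, hrow] at hone
    exact absurd hone (by decide)
  · simpa using hf.apply_one_eq_of_comp_eq_aabc h₀ hab hbc hv h hq hmin

theorem IsRankFunction.iff_of_lt_of_lt (hf : IsRankFunction σ f)
    [Std.Trichotomous (σ 1)] (h₀ : σ 0 = (· < ·)) (hab : a < b) (hbc : b < c) :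
    (σ 1 a b ↔ σ 1 b c) ∧ (σ 1 a b ↔ σ 1 a c) := by
  have aabc := hf.apply_one_eq_zero_iff h₀ hab hbc (v := ![a, a, b, c]) (p := 1) rfl hab
  have abac := hf.apply_one_eq_zero_iff h₀ hab hbc (v := ![a, b, a, c]) (p := Equiv.swap 1 2)
    (by ext i; fin_cases i <;> rfl) hbc
  have aacb := hf.apply_one_eq_zero_iff h₀ hab hbc (v := ![a, a, c, b]) (p := Equiv.swap 2 3)
    (by ext i; fin_cases i <;> rfl) (hab.trans hbc)
  exact ⟨aabc.symm.trans abac, aabc.symm.trans aacb⟩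

end FourLetters

theorem iff_of_forall_triple {P : α → α → Prop}
    (h : ∀ ⦃a b c⦄, a < b → b < c → (P a b ↔ P b c) ∧ (P a b ↔ P a c)) {x y z t : α}
    (hxy : x < y) (hzt : z < t) : P x y ↔ P z t := by
  have widen : ∀ ⦃m x y M⦄, m ≤ x → x < y → y ≤ M → (P x y ↔ P m M) := by
    intro m x y M hm hxy hM
    have hleft : P x y ↔ P m y := by
      rcases hm.eq_or_lt with rfl | hm
      · rfl
      · exact (h hm hxy).1.symm.trans (h hm hxy).2
    rcases hM.eq_or_lt with rfl | hM
    · exact hleft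
    · exact hleft.trans (h (hm.trans_lt hxy) hM).2
  exact (widen (min_le_left x z) hxy (le_max_left y t)).trans
    (widen (min_le_right x z) hzt (le_max_right y t)).symm

theorem bwtK_two_orders_not_rank_invertible_general
    (h₀ : σ 0 = (· < ·)) (h₁ : IsStrictTotalOrder α (σ 1)) {x y z t : α} (hxy : x < y) (hzt : z < t)
    (hσxy : σ 1 x y) (hσtz : σ 1 t z) : ¬ RankInvertible σ := by
  intro hinv
  obtain ⟨f, hf⟩ := hinv.exists_isRankFunction
  have hagree : σ 1 x y ↔ σ 1 z t :=
    iff_of_forall_triple (fun _ _ _ => hf.iff_of_lt_of_lt h₀) hxy hzt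
  exact asymm hσtz (hagree.mp hσxy)

end LinearOrder

/-- on the three-letter alphabet `Fin 3` with standard order, let
`K = (Id, π)` with `π` a linear (strict total) order. If there are symbols
`x < y` and `z < t` (standard order) with `x` smaller than `y` in `π` and
`z` larger than `t` in `π`, then `BWT_K` is not rank-invertible. -/
theorem bwtK_two_orders_not_rank_invertible
    (π : Fin 3 → Fin 3 → Prop) (hπ : IsStrictTotalOrder (Fin 3) π)
    (x y z t : Fin 3) (hxy : x < y) (hzt : z < t)
    (hπxy : π x y) (hπtz : π t z) :
    ¬ RankInvertible (fun d => if d % 2 = 0 then (fun a b : Fin 3 => a < b) else π) :=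
  bwtK_two_orders_not_rank_invertible_general rfl hπ hxy hzt hπxy hπtz

end Paper
end

section
/- Let Σ be a finite alphabet with |Σ| ≥ 2 and let K = (π_0, π_1, …, π_{k−1}) be a tuple of linear orders on Σ with π_0 = Id. If there exists an index i with 0 ≤ i ≤ k−3 such that π_i = Id, π_{i+1} = Id and π_{i+2} ≠ Id, then BWT_K is not rank-invertible. -/
namespace Paper

variable {α : Type*}

/-!
Rank-invertibility forces the rank of an occurrence of a symbol `c` among the rows starting with
`c` to be determined by the Parikh vector and by its rank among the rows ending with `c`, because
the number of rows starting with a symbol smaller than `c` depends on the Parikh vector only.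

For `a ≠ b` the words `u = b a^p b a^q` with `(p, q) = (i + 3, i)` and `(p, q) = (i + 2, i + 1)`
have the same Parikh vector. The other rotation starting with `b` is `v = b a^q b a^p`. Rotating
by one letter brings the first difference of `u` and `v` from position `q + 1` to position `q`. If
`a` precedes `b` in the orders at positions `i` and `i + 1`, but follows it at position `i + 2`,
then `u` rotated by one letter precedes `v` rotated by one letter for both words, whereas `u`
precedes `v` for the first word only.
-/

open Finset
open scoped List

section KLt

variable {σ : ℕ → α → α → Prop} {d : ℕ}

theorem KLt.irrefl [∀ d, Std.Irrefl (σ d)] (x : List α) : ¬ KLt σ d x x := by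
  induction x generalizing d with
  | nil => exact id
  | cons a x ih =>
    rintro (h | ⟨-, h⟩)
    · exact irrefl_of (σ d) a h
    · exact ih h

theorem KLt.trans [∀ d, IsTrans α (σ d)] {x y z : List α} (hxy : KLt σ d x y)
    (hyz : KLt σ d y z) : KLt σ d x z := by
  induction x generalizing y z d with
  | nil => exact hxy.elim
  | cons a x ih =>
    match y, z, hxy, hyz with
    | _ :: _, _ :: _, .inl hab, .inl hbc => exact .inl (trans_of (σ d) hab hbc)
    | _ :: _, _ :: _, .inl hab, .inr ⟨rfl, _⟩ => exact .inl hab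
    | _ :: _, _ :: _, .inr ⟨rfl, _⟩, .inl hbc => exact .inl hbc
    | _ :: _, _ :: _, .inr ⟨rfl, hxy⟩, .inr ⟨rfl, hyz⟩ => exact .inr ⟨rfl, ih hxy hyz⟩

theorem KLt.trichotomous [∀ d, Std.Trichotomous (σ d)] {x y : List α}
    (h : x.length = y.length) : KLt σ d x y ∨ x = y ∨ KLt σ d y x := by
  induction x generalizing y d with
  | nil => exact .inr (.inl (List.length_eq_zero_iff.1 h.symm).symm)
  | cons a x ih =>
    match y, h with
    | b :: y, h =>
      rcases trichotomous_of (σ d) a b with hab | rfl | hba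
      · exact .inl (.inl hab)
      · rcases ih (Nat.succ.inj h) with hxy | rfl | hyx
        · exact .inl (.inr ⟨rfl, hxy⟩)
        · exact .inr (.inl rfl)
        · exact .inr (.inr (.inr ⟨rfl, hyx⟩))
      · exact .inr (.inr (.inl hba))

instance KLt.isStrictOrder [∀ d, IsStrictOrder α (σ d)] : IsStrictOrder (List α) (KLt σ d) where
  irrefl := KLt.irrefl
  trans _ _ _ := KLt.trans

theorem KLt.append_cons {l x y : List α} {a b : α} (h : σ (d + l.length) a b) :
    KLt σ d (l ++ a :: x) (l ++ b :: y) := by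
  induction l generalizing d with
  | nil => exact .inl h
  | cons c l ih => exact .inr ⟨rfl, ih (by rw [Nat.add_right_comm]; exact h)⟩

end KLt

section Counting

theorem card_filter_get (p : α → Prop) [DecidablePred p] (l : List α) :
    #{m : Fin l.length | p (l.get m)} = l.countP p := by
  induction l with
  | nil => rfl
  | cons a l ih =>
    refine (Fin.card_filter_univ_succ' fun m : Fin (l.length + 1) => p ((a :: l).get m)).trans ?_
    rw [List.countP_cons, ← ih, add_comm]
    congr 1
    exact if_congr (decide_eq_true_iff).symm rfl rfl

theorem count_take_ofFn [DecidableEq α] {n : ℕ} (L : Fin n → α) (c : α) (k : ℕ) :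
    ((List.ofFn L).take k).count c = #{m : Fin n | L m = c ∧ (m : ℕ) < k} := by
  induction n generalizing k with
  | zero => simp
  | succ n ih =>
    cases k with
    | zero => simp
    | succ k =>
      rw [List.ofFn_succ, List.take_succ_cons, List.count_cons, ih, Fin.card_filter_univ_succ',
        add_comm]
      simp

theorem count_take_ofFn_succ [DecidableEq α] {n : ℕ} (L : Fin n → α) (i : Fin n) :
    ((List.ofFn L).take (i + 1)).count (L i) = #{m | L m = L i ∧ m < i} + 1 := by
  have h := List.count_getElem_take_succ (xs := List.ofFn L) (i := i) (hi := by simp)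
  rw [List.getElem_ofFn] at h
  exact h.trans (congrArg (· + 1) (count_take_ofFn L _ i))

end Counting

section Order

theorem exists_rel_and_rel_swap_of_ne {r s : α → α → Prop} [IsStrictTotalOrder α r]
    [IsStrictTotalOrder α s] (h : r ≠ s) : ∃ a b, r a b ∧ s b a := by
  by_contra! hno
  have hrs {a b : α} (hab : r a b) : s a b := by
    rcases trichotomous_of s a b with hs | rfl | hs
    · exact hs
    · exact (irrefl_of r a hab).elim
    · exact (hno a b hab hs).elim
  refine h (funext₂ fun a b => propext ⟨hrs, fun hab => ?_⟩)
  rcases trichotomous_of r a b with hr | rfl | hr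
  · exact hr
  · exact (irrefl_of s a hab).elim
  · exact (hno b a hr hab).elim

variable {β : Type*} [Fintype β] {n : ℕ}

theorem nonempty_relIso_fin (r : β → β → Prop) [IsStrictTotalOrder β r]
    (h : Fintype.card β = n) : Nonempty (((· < ·) : Fin n → Fin n → Prop) ≃r r) := by
  classical
  let _ : LinearOrder β := linearOrderOfSTO r
  exact ⟨(monoEquivOfFin β h).toRelIsoLT⟩

theorem card_filter_rel_eq_symm {r : β → β → Prop} [DecidableRel r]
    (e : ((· < ·) : Fin n → Fin n → Prop) ≃r r) (x : β) : #{y | r y x} = (e.symm x : ℕ) := by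
  rw [← Fin.card_Iio]
  exact card_equiv e.symm.toEquiv fun y => by simp [← e.symm.map_rel_iff]

end Order

section Rotation

theorem rotate_eq_get_cons (w : List α) (j : Fin w.length) :
    ∃ t, w.rotate j = w.get j :: t :=
  ⟨w.drop (j + 1) ++ w.take j, by
    rw [List.rotate_eq_drop_append_take j.2.le, List.drop_eq_getElem_cons j.2]; rfl⟩

theorem rotate_finRotate (w : List α) (j : Fin w.length) :
    w.rotate (finRotate w.length j) = w.rotate (j + 1) := by
  rw [← List.rotate_mod w (j + 1)]
  have := j.neZero
  rw [finRotate_apply, Fin.val_add, Fin.val_one', Nat.add_mod_mod]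

theorem rotate_finRotate_symm_succ (w : List α) (j : Fin w.length) :
    w.rotate ((finRotate w.length).symm j + 1) = w.rotate j := by
  rw [← rotate_finRotate, Equiv.apply_symm_apply]

theorem getLast?_rotate_succ (w : List α) (j : Fin w.length) :
    (w.rotate (j + 1)).getLast? = some (w.get j) := by
  obtain ⟨t, ht⟩ := rotate_eq_get_cons w j
  simp [← List.rotate_rotate, ht]

theorem rotate_succ_rotate_length_sub_one (w : List α) (j : Fin w.length) :
    (w.rotate (j + 1)).rotate (w.length - 1) = w.rotate j := by
  rw [List.rotate_rotate, add_assoc, Nat.add_sub_cancel' (Fin.pos j), ← List.rotate_mod,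
    Nat.add_mod_right, List.rotate_mod]

theorem primitive_of_rotate_ne {w : List α}
    (h : ∀ d, 0 < d → d < w.length → w.rotate d ≠ w) : Primitive w := by
  have ne_of_lt {i j : ℕ} (hij : i < j) (hj : j < w.length) : w.rotate i ≠ w.rotate j := by
    intro heq
    refine h (j - i) (by omega) (by omega) (List.rotate_eq_rotate (n := i) |>.1 ?_)
    rw [List.rotate_rotate, Nat.sub_add_cancel hij.le, heq]
  intro i j hi hj heq
  rcases lt_trichotomy i j with hij | hij | hij
  · exact (ne_of_lt hij hj heq).elim
  · exact hij
  · exact (ne_of_lt hij hi heq.symm).elim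

end Rotation

section SymbolRank

/-- The order `≼_K` on positions of `w`, comparing the rotations that start there; its increasing
enumeration lists the rows of the sorted rotation matrix. -/
def RowLT (σ : ℕ → α → α → Prop) (w : List α) (m j : Fin w.length) : Prop :=
  KLt σ 0 (w.rotate m) (w.rotate j)

open scoped Classical in
/-- The rank (counted from 0) of the occurrence of a symbol at position `j` of `w` among all
occurrences of that symbol, each compared by the rotation starting `s` positions after it. For
`s = 0` it is the rank within the first column of the sorted rotation matrix, for `s = 1` within
the last. -/
noncomputable def symbolRank (σ : ℕ → α → α → Prop) (s : ℕ) (w : List α) (j : Fin w.length) : ℕ :=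
  #{m : Fin w.length | w.get m = w.get j ∧ KLt σ 0 (w.rotate (m + s)) (w.rotate (j + s))}

variable {σ : ℕ → α → α → Prop}

theorem Primitive.isStrictTotalOrder_rowLT [∀ d, IsStrictTotalOrder α (σ d)] {w : List α}
    (hw : Primitive w) : IsStrictTotalOrder (Fin w.length) (RowLT σ w) where
  irrefl _ := KLt.irrefl _
  trans _ _ _ := KLt.trans
  trichotomous m j hmj hjm := by
    rcases KLt.trichotomous (σ := σ) (d := 0) (x := w.rotate m) (y := w.rotate j) (by simp)
      with h | h | h
    · exact (hmj h).elim
    · exact Fin.ext (hw m j m.2 j.2 h)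
    · exact (hjm h).elim

open scoped Classical in
theorem card_filter_rowLT [Std.Irrefl (σ 0)] (w : List α) (j : Fin w.length) :
    #{m | RowLT σ w m j} = w.countP (fun a => σ 0 a (w.get j)) + symbolRank σ 0 w j := by
  have split (m : Fin w.length) : RowLT σ w m j ↔
      σ 0 (w.get m) (w.get j) ∨ w.get m = w.get j ∧ KLt σ 0 (w.rotate m) (w.rotate j) := by
    obtain ⟨x, hx⟩ := rotate_eq_get_cons w m
    obtain ⟨y, hy⟩ := rotate_eq_get_cons w j
    have := irrefl_of (σ 0) (w.get j)
    rw [RowLT, hx, hy]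
    simp only [KLt]
    grind
  simp only [split, filter_or]
  rw [card_union_of_disjoint, card_filter_get (fun a => σ 0 a (w.get j))]
  · rfl
  · refine disjoint_filter.2 fun m _ hlt heq => ?_
    exact irrefl_of (σ 0) (w.get j) (heq.1 ▸ hlt)

theorem count_take_ofFn_get_relIso [DecidableEq α] (w : List α)
    (e : ((· < ·) : Fin w.length → Fin w.length → Prop) ≃r RowLT σ w) (j : Fin w.length) :
    ((List.ofFn fun i => w.get ((finRotate _).symm (e i))).take
      (e.symm (finRotate _ j) + 1)).count (w.get j) = symbolRank σ 1 w j + 1 := by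
  classical
  let g : Fin w.length ≃ Fin w.length := e.toEquiv.trans (finRotate _).symm
  have rotate_g (i) : w.rotate (e i) = w.rotate (g i + 1) :=
    (rotate_finRotate_symm_succ w (e i)).symm
  have g_symm : g (g.symm j) = j := g.apply_symm_apply j
  have hcount := count_take_ofFn_succ (fun i => w.get (g i)) (g.symm j)
  simp only [g_symm] at hcount
  refine hcount.trans (congrArg (· + 1) (card_equiv g fun m => ?_))
  simp only [mem_filter_univ, ← e.map_rel_iff, RowLT, rotate_g, g_symm]

open scoped Classical in
theorem RankInvertible.exists_card_filter_rowLT_eq [LinearOrder α]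
    [∀ d, IsStrictTotalOrder α (σ d)] (h : RankInvertible σ) :
    ∃ f : (α → ℕ) → α → ℕ → ℕ, ∀ w, Primitive w → ∀ j : Fin w.length,
      #{m | RowLT σ w m j} = f (fun c => w.count c) (w.get j) (symbolRank σ 1 w j + 1) := by
  obtain ⟨f, hf⟩ := h
  refine ⟨f, fun w hw j => ?_⟩
  have := hw.isStrictTotalOrder_rowLT (σ := σ)
  obtain ⟨e⟩ := nonempty_relIso_fin (RowLT σ w) (Fintype.card_fin _)
  let pred := (finRotate w.length).symm
  have rotate_pred (i) : w.rotate (e i) = w.rotate (pred (e i) + 1) :=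
    (rotate_finRotate_symm_succ w (e i)).symm
  have lf := hf _ w rfl hw (fun i => w.rotate (e i)) (fun i => w.get (pred (e i)))
    (fun i => e.symm (pred (e i)))
    (fun i => ⟨e.symm i, by rw [e.apply_symm_apply]⟩)
    (fun i i' => e.map_rel_iff.2)
    (fun i => by rw [rotate_pred, getLast?_rotate_succ])
    (fun i => by
      rw [e.apply_symm_apply, List.length_rotate, rotate_pred i,
        rotate_succ_rotate_length_sub_one])
    (e.symm (finRotate _ j))
  have parikh : List.ofFn (fun i => w.get (pred (e i))) ~ w := by
    have h := Equiv.Perm.ofFn_comp_perm (e.toEquiv.trans pred) w.get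
    rwa [List.ofFn_get] at h
  simp only [parikh.count_eq, e.apply_symm_apply, pred, Equiv.symm_apply_apply,
    count_take_ofFn_get_relIso] at lf
  rw [card_filter_rel_eq_symm e, lf]

theorem RankInvertible.symbolRank_zero_eq [LinearOrder α] [∀ d, IsStrictTotalOrder α (σ d)]
    (h : RankInvertible σ) {w w' : List α} (hw : Primitive w) (hw' : Primitive w')
    (hperm : w ~ w') {j : Fin w.length} {j' : Fin w'.length} (hj : w.get j = w'.get j')
    (hrank : symbolRank σ 1 w j = symbolRank σ 1 w' j') :
    symbolRank σ 0 w j = symbolRank σ 0 w' j' := by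
  classical
  obtain ⟨f, hf⟩ := h.exists_card_filter_rowLT_eq
  have hrow := hf w hw j
  simp only [hperm.count_eq, hj, hrank] at hrow
  rw [← hf w' hw' j', card_filter_rowLT, card_filter_rowLT, hj, hperm.countP_eq] at hrow
  exact Nat.add_left_cancel hrow

end SymbolRank

section TwoBlock

variable {a b : α} {p q : ℕ}

/-- The word `b a^p b a^q`. Exchanging `p` and `q` gives its rotation that starts at the other
`b`. -/
def twoBlock (a b : α) (p q : ℕ) : List α :=
  b :: (List.replicate p a ++ b :: List.replicate q a)

theorem length_twoBlock : (twoBlock a b p q).length = p + q + 2 := by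
  simp [twoBlock]; omega

theorem twoBlock_perm {p' q' : ℕ} (h : p + q = p' + q') :
    twoBlock a b p q ~ twoBlock a b p' q' := by
  refine List.Perm.cons b (List.perm_middle.trans (.trans ?_ List.perm_middle.symm))
  rw [← List.replicate_add, ← List.replicate_add, h]

theorem rotate_twoBlock : (twoBlock a b p q).rotate (p + 1) = twoBlock a b q p := by
  simpa [twoBlock] using
    List.rotate_append_length_eq (b :: List.replicate p a) (b :: List.replicate q a)

theorem getElem_twoBlock_eq_iff (hab : a ≠ b) {m : ℕ} (hm : m < (twoBlock a b p q).length) :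
    (twoBlock a b p q)[m] = b ↔ m = 0 ∨ m = p + 1 := by
  cases m with
  | zero => simp [twoBlock]
  | succ m =>
    simp only [twoBlock, List.getElem_cons_succ, List.getElem_append, List.getElem_cons,
      List.getElem_replicate, List.length_replicate]
    grind

theorem primitive_twoBlock (hab : a ≠ b) (hpq : p ≠ q) : Primitive (twoBlock a b p q) := by
  refine primitive_of_rotate_ne fun d hd hlt heq => ?_
  have hstart : (twoBlock a b p q)[d] = b := by
    obtain ⟨t, ht⟩ := rotate_eq_get_cons _ ⟨d, hlt⟩
    exact (List.cons.inj (heq.symm.trans ht)).1.symm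
  obtain rfl : d = p + 1 := ((getElem_twoBlock_eq_iff hab hlt).1 hstart).resolve_left hd.ne'
  rw [rotate_twoBlock] at heq
  have hq : q + 1 < (twoBlock a b q p).length := by rw [length_twoBlock]; omega
  have hsecond := (getElem_twoBlock_eq_iff hab hq).2 (.inr rfl)
  simp only [heq] at hsecond
  have := (getElem_twoBlock_eq_iff hab _).1 hsecond
  omega

theorem twoBlock_eq_of_lt (hqp : q < p) :
    ∃ t, twoBlock a b p q = b :: (List.replicate q a ++ a :: t) := by
  obtain ⟨r, rfl⟩ := Nat.exists_eq_add_of_lt hqp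
  refine ⟨List.replicate r a ++ b :: List.replicate q a, ?_⟩
  simp [twoBlock, List.replicate_add, List.replicate_succ, add_assoc]

variable {σ : ℕ → α → α → Prop}

theorem twoBlock_kLt_swap (hqp : q < p) (h : σ (q + 1) a b) :
    KLt σ 0 (twoBlock a b p q) (twoBlock a b q p) := by
  obtain ⟨t, ht⟩ := twoBlock_eq_of_lt (a := a) (b := b) hqp
  rw [ht]
  exact KLt.append_cons (l := b :: List.replicate q a) (by simpa using h)

theorem swap_kLt_twoBlock (hqp : q < p) (h : σ (q + 1) b a) :
    KLt σ 0 (twoBlock a b q p) (twoBlock a b p q) := by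
  obtain ⟨t, ht⟩ := twoBlock_eq_of_lt (a := a) (b := b) hqp
  rw [ht]
  exact KLt.append_cons (l := b :: List.replicate q a) (by simpa using h)

theorem rotate_one_twoBlock_kLt_swap (hqp : q < p) (h : σ q a b) :
    KLt σ 0 ((twoBlock a b p q).rotate 1) ((twoBlock a b q p).rotate 1) := by
  obtain ⟨t, ht⟩ := twoBlock_eq_of_lt (a := a) (b := b) hqp
  rw [ht]
  simpa [twoBlock] using KLt.append_cons (σ := σ) (d := 0) (l := List.replicate q a)
    (x := t ++ [b]) (y := List.replicate p a ++ [b]) (by simpa using h)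

/-- The position of the first `b` in `twoBlock a b p q`. -/
def twoBlockStart (a b : α) (p q : ℕ) : Fin (twoBlock a b p q).length :=
  ⟨0, Nat.succ_pos _⟩

open scoped Classical in
theorem symbolRank_twoBlockStart [∀ d, Std.Irrefl (σ d)] (hab : a ≠ b) (s : ℕ) :
    symbolRank σ s (twoBlock a b p q) (twoBlockStart a b p q) =
      if KLt σ 0 ((twoBlock a b q p).rotate s) ((twoBlock a b p q).rotate s) then 1 else 0 := by
  have hp : p + 1 < (twoBlock a b p q).length := by rw [length_twoBlock]; omega
  have second_iff (m : Fin (twoBlock a b p q).length) :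
      ((twoBlock a b p q).get m = b ∧
        KLt σ 0 ((twoBlock a b p q).rotate (m + s)) ((twoBlock a b p q).rotate s)) ↔
      m = ⟨p + 1, hp⟩ ∧ KLt σ 0 ((twoBlock a b q p).rotate s) ((twoBlock a b p q).rotate s) := by
    rw [← rotate_twoBlock (p := p), List.get_eq_getElem, getElem_twoBlock_eq_iff hab,
      List.rotate_rotate, Fin.ext_iff]
    constructor
    · rintro ⟨hm | hm, hlt⟩
      · rw [hm, zero_add] at hlt
        exact (KLt.irrefl _ hlt).elim
      · exact ⟨hm, hm ▸ hlt⟩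
    · rintro ⟨hm, hlt⟩
      exact ⟨.inr hm, hm ▸ hlt⟩
  have start : (twoBlock a b p q).get (twoBlockStart a b p q) = b := rfl
  have zero : ((twoBlockStart a b p q : Fin _) : ℕ) = 0 := rfl
  simp only [symbolRank, start, zero, zero_add, second_iff]
  split_ifs with h <;> simp [h, filter_eq']

variable [∀ d, IsStrictOrder α (σ d)]

theorem symbolRank_one_twoBlockStart (hqp : q < p) (h : σ q a b) :
    symbolRank σ 1 (twoBlock a b p q) (twoBlockStart a b p q) = 0 := by
  rw [symbolRank_twoBlockStart (ne_of_irrefl h),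
    if_neg (asymm (rotate_one_twoBlock_kLt_swap hqp h))]

theorem symbolRank_zero_twoBlockStart_eq_zero (hqp : q < p) (h : σ (q + 1) a b) :
    symbolRank σ 0 (twoBlock a b p q) (twoBlockStart a b p q) = 0 := by
  rw [symbolRank_twoBlockStart (ne_of_irrefl h), List.rotate_zero, List.rotate_zero,
    if_neg (asymm (twoBlock_kLt_swap hqp h))]

theorem symbolRank_zero_twoBlockStart_eq_one (hqp : q < p) (h : σ (q + 1) b a) :
    symbolRank σ 0 (twoBlock a b p q) (twoBlockStart a b p q) = 1 := by
  rw [symbolRank_twoBlockStart (ne_of_irrefl h).symm, List.rotate_zero, List.rotate_zero,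
    if_pos (swap_kLt_twoBlock hqp h)]

end TwoBlock

section NotRankInvertible

variable {σ : ℕ → α → α → Prop} [∀ d, IsStrictTotalOrder α (σ d)]

theorem not_rankInvertible_of_rel [LinearOrder α] {i : ℕ} {a b : α} (h₀ : σ i a b)
    (h₁ : σ (i + 1) a b) (h₂ : σ (i + 2) b a) : ¬ RankInvertible σ := by
  intro h
  have hab : a ≠ b := ne_of_irrefl h₀
  have hrank := h.symbolRank_zero_eq
    (primitive_twoBlock hab (by omega : i + 3 ≠ i))
    (primitive_twoBlock hab (by omega : i + 2 ≠ i + 1))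
    (twoBlock_perm (by omega))
    (j := twoBlockStart ..) (j' := twoBlockStart ..) rfl
    (by rw [symbolRank_one_twoBlockStart (by omega) h₀,
      symbolRank_one_twoBlockStart (by omega) h₁])
  rw [symbolRank_zero_twoBlockStart_eq_zero (by omega) h₁,
    symbolRank_zero_twoBlockStart_eq_one (by omega) h₂] at hrank
  exact zero_ne_one hrank

theorem bwtK_triplet_id_id_not_rank_invertible_general [LinearOrder α] {i : ℕ}
    (hi : σ i = σ (i + 1)) (hi2 : σ (i + 1) ≠ σ (i + 2)) : ¬ RankInvertible σ := by
  obtain ⟨a, b, h₁, h₂⟩ := exists_rel_and_rel_swap_of_ne hi2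
  exact not_rankInvertible_of_rel (hi ▸ h₁) h₁ h₂

end NotRankInvertible

/-- for a finite alphabet with at least two symbols and a tuple
`K = (π 0, …, π (k-1))` with `π 0 = Id`, if `K` contains a triplet
`(Id, Id, π)` with `π ≠ Id` (i.e. `π i = Id`, `π (i+1) = Id`,
`π (i+2) ≠ Id` for some `i ≤ k−3`), then `BWT_K` is not rank-invertible. -/
theorem bwtK_triplet_id_id_not_rank_invertible [LinearOrder α] [Fintype α]
    (hcard : 2 ≤ Fintype.card α)
    (k : ℕ) (hk : 0 < k) (π : Fin k → α → α → Prop)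
    (horder : ∀ t, IsStrictTotalOrder α (π t))
    (h0 : π ⟨0, hk⟩ = fun a b : α => a < b)
    (i : ℕ) (hik : i + 2 < k)
    (hi : π ⟨i, by omega⟩ = fun a b : α => a < b)
    (hi1 : π ⟨i + 1, by omega⟩ = fun a b : α => a < b)
    (hi2 : π ⟨i + 2, hik⟩ ≠ fun a b : α => a < b) :
    ¬ RankInvertible (fun d => π ⟨d % k, Nat.mod_lt d hk⟩) := by
  have := fun d => horder ⟨d % k, Nat.mod_lt d hk⟩
  refine bwtK_triplet_id_id_not_rank_invertible_general (i := i) ?_ ?_ <;>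
    simp only [Nat.mod_eq_of_lt (by omega : i < k), Nat.mod_eq_of_lt (by omega : i + 1 < k),
      Nat.mod_eq_of_lt hik, hi, hi1]
  exact hi2.symm

end Paper
end
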